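/- arXiv:2012.04705 — 2 statements merged into one kernel-verified Lean document; each statement's English description precedes it below -/
import Mathlib

section
/- Let i ≥ 1, L ≥ 1 and nonnegative integers a_1,…,a_i with a_i ≥ a_j for all j ∈ [i] be given, set K = (i−1)L + Σ_{j=1}^{i} a_j + 1, and let R_u = min{ 2(K−(i−1)L) + i − 2 − a_i , K }. Then the optimal broadcast rate R* of the (a_i,…,a_1)_L-bar-ICP satisfies R_u ≤ 2·R*, i.e., R_u/R* ≤ 2. -/
open Finset

/-- `<m>_n`: the unique element of `{1,…,n}` congruent to `m` modulo `n`. -/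
def angMod (m : ℤ) (n : ℕ) : ℕ :=
  if m % (n : ℤ) = 0 then n else (m % (n : ℤ)).toNat

/-- Message indices of the bar-ICP: pairs in `[K] × [i]`. -/
abbrev Msg (K i : ℕ) : Type :=
  {p : ℕ × ℕ // p.1 ∈ Finset.Icc 1 K ∧ p.2 ∈ Finset.Icc 1 i}

/-- Users of the bar-ICP: elements of `[K]`. -/
abbrev User (K : ℕ) : Type := {k : ℕ // k ∈ Finset.Icc 1 K}

/-- The side-information index set `K_k` of user `k` in the
`(a_i,…,a_1)_L`-bar-ICP, as a set of pairs `(b,t)`. -/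
def knownIdx (K i L : ℕ) (a : ℕ → ℕ) (k : ℕ) : Set (ℕ × ℕ) :=
  {p | ∃ t ∈ Finset.Icc 1 i, ∃ v ∈ Finset.Icc 1 (i - 1), ∃ r ∈ Finset.Icc 1 L,
    p.2 = t ∧
    p.1 = angMod ((k : ℤ) + (∑ j ∈ Finset.Icc 1 v, (a (angMod ((i : ℤ) + (t : ℤ) - (j : ℤ)) i) : ℤ))
        + ((v : ℤ) - 1) * (L : ℤ) + (r : ℤ)) K}

/-- Want set of user `u` in the bar-ICP: the messages `(u,t)`, `t ∈ [i]`. -/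
def barWant (K i : ℕ) (u : User K) : Set (Msg K i) :=
  {p | p.1.1 = u.1}

/-- Known set of user `u` in the bar-ICP. -/
def barKnown (K i L : ℕ) (a : ℕ → ℕ) (u : User K) : Set (Msg K i) :=
  {p | p.1 ∈ knownIdx K i L a u.1}

/-- A valid index code of length `ℓ` for message length `t` for the index coding
problem with message index set `I`, users `U`, want sets `W` and known sets `Kn`. -/
def ValidCode {I U : Type} (W Kn : U → Set I) (t ℓ : ℕ) : Prop :=
  ∃ E : (I → Fin t → Bool) → Fin ℓ → Bool,
  ∃ D : ∀ u : U, (Fin ℓ → Bool) → (↥(Kn u) → Fin t → Bool) → (↥(W u) → Fin t → Bool),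
    ∀ x : I → Fin t → Bool, ∀ u : U,
      D u (E x) (fun m => x m.1) = fun m => x m.1

/-- The optimal broadcast rate of an index coding problem. -/
noncomputable def optRate {I U : Type} (W Kn : U → Set I) : ℝ :=
  sInf {ρ : ℝ | ∃ t ℓ : ℕ, 1 ≤ t ∧ ValidCode W Kn t ℓ ∧ ρ = (ℓ : ℝ) / (t : ℝ)}

/-!
In layer `t`, user `k` knows none of the `a_{<i+t-1>}` messages that follow its own. Hence, if only
the first `1 + a_{<i+t-1>}` messages of each layer are kept, a user can reach a known kept message
only by wrapping around modulo `K`, so that the index of this message is smaller than that of the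
user. The kept messages form an acyclic set of size `i + ∑ a_j`, and the codeword of any index code
is at least as long as these messages together: decoding by increasing index recovers all of them
from it. Hence `R* ≥ i + ∑ a_j = K - (i-1)L + i - 1`, and twice this bound is at least `R_u`.
-/

section IndexCoding

variable {I U : Type} {W Kn : U → Set I}

/-- A set `T` of messages is acyclic if its messages can be ranked so that each of them is demanded
by a user who knows, within `T`, only messages of smaller rank. The ranking encodes acyclicity of
the side-information graph induced on `T`. -/
def IsAcyclicSet (W Kn : U → Set I) (T : Set I) : Prop :=
  ∃ rank : I → ℕ, ∀ m ∈ T, ∃ u, m ∈ W u ∧ ∀ p ∈ Kn u, p ∈ T → rank p < rank m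

theorem IsAcyclicSet.eq_of_encode_eq {T : Set I} (hT : IsAcyclicSet W Kn T) {β γ : Type*}
    {E : (I → β) → γ}
    (hE : ∀ u x y, E x = E y → Set.EqOn x y (Kn u) → Set.EqOn x y (W u))
    {x y : I → β} (hxy : E x = E y) (hoff : Set.EqOn x y Tᶜ) : x = y := by
  obtain ⟨rank, hrank⟩ := hT
  funext m
  induction hn : rank m using Nat.strong_induction_on generalizing m with
  | _ n ih =>
    by_cases hm : m ∈ T
    · obtain ⟨u, hmu, hlt⟩ := hrank m hm
      have known_agree : Set.EqOn x y (Kn u) := fun p hp => by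
        by_cases hpT : p ∈ T
        · exact ih _ (hn ▸ hlt p hp hpT) p rfl
        · exact hoff hpT
      exact hE u x y hxy known_agree hmu
    · exact hoff hm

theorem ValidCode.exists_encoding {t ℓ : ℕ} (h : ValidCode W Kn t ℓ) :
    ∃ E : (I → Fin t → Bool) → Fin ℓ → Bool,
      ∀ u x y, E x = E y → Set.EqOn x y (Kn u) → Set.EqOn x y (W u) := by
  obtain ⟨E, D, hD⟩ := h
  refine ⟨E, fun u x y hxy hknown m hm => ?_⟩
  have same_side_info : (fun p : Kn u => x p) = fun p : Kn u => y p :=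
    funext fun p => hknown p.2
  have same_decoding := hD x u
  rw [hxy, same_side_info, hD y u] at same_decoding
  exact (congrFun same_decoding ⟨m, hm⟩).symm

theorem ValidCode.card_mul_le {t ℓ : ℕ} (h : ValidCode W Kn t ℓ) {T : Finset I}
    (hT : IsAcyclicSet W Kn (T : Set I)) : #T * t ≤ ℓ := by
  classical
  obtain ⟨E, hE⟩ := h.exists_encoding
  let zeroExtend (y : T → Fin t → Bool) : I → Fin t → Bool :=
    Function.extend Subtype.val y fun _ _ => false
  have encode_injective : Function.Injective (E ∘ zeroExtend) := fun y y' hyy' => by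
    have agree_off : Set.EqOn (zeroExtend y) (zeroExtend y') (T : Set I)ᶜ := fun m hm => by
      have hm' : ¬∃ p : T, p.1 = m := by rintro ⟨p, rfl⟩; exact hm p.2
      simp only [zeroExtend, Function.extend_apply' _ _ _ hm']
    exact Function.extend_injective Subtype.val_injective _ (hT.eq_of_encode_eq hE hyy' agree_off)
  have card_le := Fintype.card_le_of_injective _ encode_injective
  simp only [Fintype.card_fun, Fintype.card_bool, Fintype.card_fin, Fintype.card_coe,
    ← pow_mul] at card_le
  rw [mul_comm]
  exact (Nat.pow_le_pow_iff_right one_lt_two).mp card_le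

theorem validCode_uncoded (W Kn : U → Set I) [Fintype I] (t : ℕ) :
    ValidCode W Kn t (Fintype.card I * t) := by
  let e := Fintype.equivFin I
  refine ⟨fun x n => x (e.symm (finProdFinEquiv.symm n).1) (finProdFinEquiv.symm n).2,
    fun _ z _ m s => z (finProdFinEquiv (e m, s)), fun x u => ?_⟩
  simp only [Equiv.symm_apply_apply]

theorem IsAcyclicSet.card_le_optRate [Finite I] {T : Finset I}
    (hT : IsAcyclicSet W Kn (T : Set I)) : (#T : ℝ) ≤ optRate W Kn := by
  have := Fintype.ofFinite I
  refine le_csInf ⟨_, 1, _, le_rfl, validCode_uncoded W Kn 1, rfl⟩ ?_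
  rintro _ ⟨t, ℓ, ht, hcode, rfl⟩
  rw [le_div_iff₀ (by exact_mod_cast ht)]
  exact_mod_cast hcode.card_mul_le hT

end IndexCoding

section AngMod

variable {n : ℕ}

theorem angMod_mem_Icc (m : ℤ) (hn : 1 ≤ n) : angMod m n ∈ Icc 1 n := by
  have := Int.emod_nonneg m (b := n) (by omega)
  have := Int.emod_lt_of_pos m (b := n) (by omega)
  rw [mem_Icc, angMod]
  split_ifs <;> omega

theorem angMod_modEq (m : ℤ) (hn : 1 ≤ n) : (angMod m n : ℤ) ≡ m [ZMOD n] := by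
  rw [angMod]
  split_ifs with h
  · exact Int.emod_self.trans h.symm
  · rw [Int.toNat_of_nonneg (Int.emod_nonneg m (by omega))]
    exact Int.mod_modEq m n

theorem eq_of_intModEq_of_mem_Icc {x y : ℕ} (hx : x ∈ Icc 1 n) (hy : y ∈ Icc 1 n)
    (h : (x : ℤ) ≡ y [ZMOD n]) : x = y := by
  rw [mem_Icc] at hx hy
  exact (Int.natCast_modEq_iff.mp h).eq_of_abs_lt (abs_lt.mpr (by omega))

theorem sum_Icc_angMod {M : Type*} [AddCommMonoid M] (g : ℕ → M) {f : ℕ → ℤ}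
    (hf : ∀ x y : ℕ, f x ≡ f y [ZMOD n] → (x : ℤ) ≡ y [ZMOD n]) :
    ∑ j ∈ Icc 1 n, g (angMod (f j) n) = ∑ j ∈ Icc 1 n, g j := by
  have one_le {j : ℕ} (hj : j ∈ Icc 1 n) : 1 ≤ n := nonempty_Icc.mp ⟨j, hj⟩
  have mapsTo : Set.MapsTo (fun j => angMod (f j) n) (Icc 1 n : Finset ℕ) (Icc 1 n : Finset ℕ) :=
    fun j hj => angMod_mem_Icc _ (one_le hj)
  have injOn : Set.InjOn (fun j => angMod (f j) n) (Icc 1 n : Finset ℕ) := fun x hx y hy hxy => by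
    have angMod_eq : angMod (f x) n = angMod (f y) n := hxy
    have modEq_x := angMod_modEq (f x) (one_le hx)
    rw [angMod_eq] at modEq_x
    have modEq : f x ≡ f y [ZMOD n] := modEq_x.symm.trans (angMod_modEq (f y) (one_le hx))
    exact eq_of_intModEq_of_mem_Icc hx hy (hf x y modEq)
  exact sum_nbij _ mapsTo injOn (surjOn_of_injOn_of_card_le _ mapsTo injOn le_rfl) fun _ _ => rfl

theorem angMod_add_lt_self {K k d : ℕ} (hk : 1 ≤ k) (hd : d < K) (h : angMod (k + d) K ≤ d) :
    angMod (k + d) K < k := by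
  by_contra! hle
  have K_dvd : (K : ℤ) ∣ k + d - angMod (k + d) K := (angMod_modEq _ (by omega)).dvd
  have := Int.eq_zero_of_abs_lt_dvd K_dvd (abs_lt.mpr (by omega))
  omega

end AngMod

section BarICP

variable {i L K : ℕ} {a : ℕ → ℕ}

instance (K i : ℕ) : Fintype (Msg K i) :=
  Fintype.subtype (Icc 1 K ×ˢ Icc 1 i) fun _ => mem_product

/-- The gap `a_{<i+t-1>}` of layer `t`: the first message of layer `t` known to user `k` is
`k + firstGap i a t + 1`, up to reduction modulo `K`. -/
def firstGap (i : ℕ) (a : ℕ → ℕ) (t : ℕ) : ℕ := a (angMod ((i : ℤ) + t - 1) i)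

theorem sum_firstGap (i : ℕ) (a : ℕ → ℕ) :
    ∑ t ∈ Icc 1 i, firstGap i a t = ∑ j ∈ Icc 1 i, a j :=
  sum_Icc_angMod a fun x y h => by
    simp only [add_sub_right_comm] at h
    exact h.add_left_cancel' _

theorem exists_shift_of_mem_knownIdx (hK : (i - 1) * L + ∑ j ∈ Icc 1 i, a j < K) {k : ℕ}
    {p : ℕ × ℕ} (hp : p ∈ knownIdx K i L a k) :
    ∃ d, firstGap i a p.2 < d ∧ d < K ∧ p.1 = angMod (k + d) K := by
  obtain ⟨t, -, v, hv, r, hr, rfl, hp1⟩ := hp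
  rw [mem_Icc] at hv hr
  let b (j : ℕ) : ℕ := a (angMod ((i : ℤ) + p.2 - j) i)
  have firstGap_le : firstGap i a p.2 ≤ ∑ j ∈ Icc 1 v, b j := by
    have := single_le_sum (f := b) (fun _ _ => Nat.zero_le _) (mem_Icc.mpr ⟨le_rfl, hv.1⟩)
    simpa only [b, firstGap, Nat.cast_one] using this
  have sum_b : ∑ j ∈ Icc 1 i, b j = ∑ j ∈ Icc 1 i, a j :=
    sum_Icc_angMod a fun x y h => by
      simpa only [sub_sub_cancel] using (Int.ModEq.refl ((i : ℤ) + p.2)).sub h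
  have sum_le : ∑ j ∈ Icc 1 v, b j ≤ ∑ j ∈ Icc 1 i, a j :=
    sum_b ▸ sum_le_sum_of_subset (Icc_subset_Icc le_rfl (by omega))
  have block_le : (v - 1) * L + r ≤ (i - 1) * L := calc
    (v - 1) * L + r ≤ (v - 1) * L + L := by gcongr; exact hr.2
    _ = (v - 1 + 1) * L := (Nat.succ_mul _ _).symm
    _ ≤ (i - 1) * L := by gcongr; omega
  refine ⟨∑ j ∈ Icc 1 v, b j + (v - 1) * L + r, by omega, by omega, ?_⟩
  rw [hp1]
  push_cast [Nat.cast_sub hv.1]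
  simp only [b, add_assoc]

/-- The messages `(b, t)` with `b ≤ h t`: the first `h t` messages of each layer `t`. -/
def lowMsgs (K i : ℕ) (h : ℕ → ℕ) : Finset (Msg K i) := {p | p.1.1 ≤ h p.1.2}

theorem card_lowMsgs {h : ℕ → ℕ} (hK : ∀ t ∈ Icc 1 i, h t ≤ K) :
    #(lowMsgs K i h) = ∑ t ∈ Icc 1 i, h t := by
  have card_sigma_eq : #((Icc 1 i).sigma fun t => Icc 1 (h t)) = ∑ t ∈ Icc 1 i, h t := by
    simp only [card_sigma, Nat.card_Icc, Nat.add_sub_cancel]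
  rw [← card_sigma_eq]
  refine card_bij (fun p _ => ⟨p.1.2, p.1.1⟩) (fun p hp => ?_) (fun p _ q _ hpq => ?_) ?_
  · exact mem_sigma.mpr ⟨p.2.2, mem_Icc.mpr ⟨(mem_Icc.mp p.2.1).1, (mem_filter.mp hp).2⟩⟩
  · simp only [Sigma.mk.injEq, heq_eq_eq] at hpq
    exact Subtype.ext (Prod.ext hpq.2 hpq.1)
  · rintro ⟨t, b⟩ htb
    obtain ⟨ht, hb⟩ := mem_sigma.mp htb
    obtain ⟨one_le_b, b_le⟩ := mem_Icc.mp hb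
    exact ⟨⟨(b, t), mem_Icc.mpr ⟨one_le_b, b_le.trans (hK t ht)⟩, ht⟩,
      mem_filter.mpr ⟨mem_univ _, b_le⟩, rfl⟩

theorem isAcyclicSet_lowMsgs (hK : (i - 1) * L + ∑ j ∈ Icc 1 i, a j < K) :
    IsAcyclicSet (barWant K i) (barKnown K i L a)
      (lowMsgs K i fun t => firstGap i a t + 1 : Set (Msg K i)) := by
  refine ⟨fun p => p.1.1, fun m _ => ⟨⟨m.1.1, m.2.1⟩, rfl, fun p hp hlow => ?_⟩⟩
  obtain ⟨d, gap_lt, d_lt, hpd⟩ := exists_shift_of_mem_knownIdx hK hp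
  have p_le : p.1.1 ≤ firstGap i a p.1.2 + 1 := (mem_filter.mp hlow).2
  change p.1.1 < m.1.1
  rw [hpd] at p_le ⊢
  exact angMod_add_lt_self (mem_Icc.mp m.2.1).1 d_lt (p_le.trans gap_lt)

theorem sum_add_le_optRate_bar (hK : (i - 1) * L + ∑ j ∈ Icc 1 i, a j < K) :
    ((∑ j ∈ Icc 1 i, a j + i : ℕ) : ℝ) ≤ optRate (barWant K i) (barKnown K i L a) := by
  have low_le : ∀ t ∈ Icc 1 i, firstGap i a t + 1 ≤ K := fun t ht => by
    have := single_le_sum (f := firstGap i a) (fun _ _ => Nat.zero_le _) ht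
    rw [sum_firstGap] at this
    omega
  have card_eq : #(lowMsgs K i fun t => firstGap i a t + 1) = ∑ j ∈ Icc 1 i, a j + i := by
    rw [card_lowMsgs low_le, sum_add_distrib, sum_firstGap, sum_const, Nat.card_Icc, smul_eq_mul,
      mul_one, Nat.add_sub_cancel]
  exact card_eq ▸ (isAcyclicSet_lowMsgs hK).card_le_optRate

end BarICP

theorem stmt2_general (i L : ℕ) (hi : 1 ≤ i) (a : ℕ → ℕ)
    (K : ℕ) (hK : K = (i - 1) * L + (∑ j ∈ Finset.Icc 1 i, a j) + 1) :
    2 * ((K : ℝ) - ((i : ℝ) - 1) * (L : ℝ)) + (i : ℝ) - 2 - (a i : ℝ) ≤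
      2 * optRate (barWant K i) (barKnown K i L a) := by
  have lower := sum_add_le_optRate_bar (Nat.lt_of_succ_le hK.ge)
  have K_eq : (K : ℝ) = ((i : ℝ) - 1) * L + (∑ j ∈ Icc 1 i, a j : ℕ) + 1 := by
    rw [hK]
    push_cast [Nat.cast_sub hi]
    rfl
  push_cast at lower K_eq
  linarith [Nat.cast_nonneg (α := ℝ) (a i), Nat.cast_nonneg (α := ℝ) i]

/-- Corollary 3 of the paper: the upper bound
`R_u = min{2(K−(i−1)L)+i−2−a_i, K}` is at most twice the optimal broadcast
rate of the `(a_i,…,a_1)_L`-bar-ICP. -/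
theorem stmt2 (i L : ℕ) (hi : 1 ≤ i) (hL : 1 ≤ L) (a : ℕ → ℕ)
    (hmax : ∀ j ∈ Finset.Icc 1 i, a j ≤ a i)
    (K : ℕ) (hK : K = (i - 1) * L + (∑ j ∈ Finset.Icc 1 i, a j) + 1)
    (Ru : ℝ)
    (hRu : Ru = min (2 * ((K : ℝ) - ((i : ℝ) - 1) * (L : ℝ)) + (i : ℝ) - 2 - (a i : ℝ)) (K : ℝ)) :
    Ru ≤ 2 * optRate (barWant K i) (barKnown K i L a) := by
  rw [hRu]
  exact (min_le_left _ _).trans (stmt2_general i L hi a K hK)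
end

section
/- Let L ≥ 1 and nonnegative integers a_1, a_2 be given, set K = L + a_1 + a_2 + 1 and p = a_1 + a_2 + 2, and suppose p divides K. Color the nodes of the (a_2,a_1)_L-bar-ICP (the case i = 2) by assigning node (k,1) the color <k>_p and node (k,2) the color <k + a_2 + 1>_p, for all k ∈ [K] (so every color appears exactly K/p times in each column). Then this coloring is proper: whenever two distinct nodes receive the same color, each is a side-information node of the other. -/
open Finset

/-!
The nodes of column `t` unknown to user `k` lie on the rows `k + d` with `-a_t ≤ d ≤ a_{3-t}`, taken
modulo `K`: the side-information window of length `L` is complementary to this window of length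
`a_1 + a_2 + 1 = p - 1`. Because `p ∣ K`, the rows can be compared modulo `p`. Two nodes of the same
color in different columns have row difference `≡ a_{3-t} + 1 ≡ -(a_t + 1)` modulo `p`, the only
residue missed by the window; in the same column the difference is `≡ 0`, which the window attains
only at `d = 0`, that is, on the same node.
-/

theorem angMod_eq_angMod_iff {n : ℕ} (hn : 0 < n) {x y : ℤ} :
    angMod x n = angMod y n ↔ x ≡ y [ZMOD n] := by
  have hn' : (0 : ℤ) < n := by exact_mod_cast hn
  have hx := Int.emod_nonneg x hn'.ne'
  have hy := Int.emod_nonneg y hn'.ne'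
  have hxn := Int.emod_lt_of_pos x hn'
  have hyn := Int.emod_lt_of_pos y hn'
  unfold angMod Int.ModEq
  split_ifs <;> omega

theorem angMod_natCast_of_mem_Icc {b n : ℕ} (hb : b ∈ Icc 1 n) : angMod b n = b := by
  obtain ⟨hb₁, hbn⟩ := Finset.mem_Icc.mp hb
  rcases hbn.eq_or_lt with rfl | hlt
  · simp [angMod]
  · have hmod : (b : ℤ) % n = b := Int.emod_eq_of_lt (by omega) (by omega)
    rw [angMod, hmod, if_neg (by omega), Int.toNat_natCast]

theorem eq_angMod_iff {b n : ℕ} (hb : b ∈ Icc 1 n) {x : ℤ} :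
    b = angMod x n ↔ (b : ℤ) ≡ x [ZMOD n] := by
  obtain ⟨hb₁, hbn⟩ := Finset.mem_Icc.mp hb
  rw [← angMod_eq_angMod_iff (by omega), angMod_natCast_of_mem_Icc hb]

theorem eq_of_modEq_of_mem_Icc {b k n : ℕ} (hb : b ∈ Icc 1 n) (hk : k ∈ Icc 1 n)
    (h : (b : ℤ) ≡ k [ZMOD n]) : b = k :=
  ((eq_angMod_iff hb).mpr h).trans (angMod_natCast_of_mem_Icc hk)

theorem exists_modEq_add_or_exists_modEq_mem_Icc (x : ℤ) (L s s' : ℕ) :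
    (∃ r ∈ Icc 1 L, x ≡ s + r [ZMOD (L + s + s' + 1 : ℕ)]) ∨
      ∃ d ∈ Icc (-s' : ℤ) s, x ≡ d [ZMOD (L + s + s' + 1 : ℕ)] := by
  set K := L + s + s' + 1
  have hK₀ : (0 : ℤ) < K := by omega
  have hnonneg := Int.emod_nonneg (x + s') hK₀.ne'
  have hlt := Int.emod_lt_of_pos (x + s') hK₀
  obtain ⟨d, hd⟩ : ∃ d, d = (x + s') % K - s' := ⟨_, rfl⟩
  have hxd : x ≡ d [ZMOD K] := by
    simpa [hd] using (Int.mod_modEq (x + s') K).symm.sub_right (s' : ℤ)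
  rcases le_or_gt d s with hds | hds
  · exact .inr ⟨d, Finset.mem_Icc.mpr ⟨by omega, hds⟩, hxd⟩
  · refine .inl ⟨(d - s).toNat, Finset.mem_Icc.mpr (by omega), ?_⟩
    rwa [Int.toNat_of_nonneg (by omega), add_sub_cancel]

theorem mem_Icc_one_two_iff {t : ℕ} : t ∈ Icc 1 2 ↔ t = 1 ∨ t = 2 := by
  rw [Finset.mem_Icc]
  omega

theorem mem_knownIdx_two_iff {K L : ℕ} {a : ℕ → ℕ} {k b t : ℕ} (hb : b ∈ Icc 1 K)
    (ht : t ∈ Icc 1 2) :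
    (b, t) ∈ knownIdx K 2 L a k ↔ ∃ r ∈ Icc 1 L, (b : ℤ) - k ≡ a (3 - t) + r [ZMOD K] := by
  have hindex : angMod (2 + t - 1) 2 = 3 - t := by
    obtain rfl | rfl := mem_Icc_one_two_iff.mp ht
    all_goals simp [angMod]
  have hrow (r : ℕ) : b = angMod (k + a (3 - t) + r) K ↔
      (b : ℤ) - k ≡ a (3 - t) + r [ZMOD K] := by
    rw [eq_angMod_iff hb, Int.modEq_iff_dvd, Int.modEq_iff_dvd]
    ring_nf
  simp [knownIdx, hindex, hrow, Finset.mem_Icc.mp ht]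

theorem exists_modEq_of_notMem_knownIdx_two {K L : ℕ} {a : ℕ → ℕ} {k b t : ℕ}
    (hK : K = L + a 1 + a 2 + 1) (hb : b ∈ Icc 1 K) (ht : t ∈ Icc 1 2)
    (h : (b, t) ∉ knownIdx K 2 L a k) :
    ∃ d ∈ Icc (-a t : ℤ) (a (3 - t)), (b : ℤ) - k ≡ d [ZMOD K] := by
  have hKt : K = L + a (3 - t) + a t + 1 := by
    obtain rfl | rfl := mem_Icc_one_two_iff.mp ht
    all_goals simp only [Nat.reduceSub]; omega
  rw [mem_knownIdx_two_iff hb ht, hKt] at h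
  rw [hKt]
  exact (exists_modEq_add_or_exists_modEq_mem_Icc _ L _ _).resolve_left h

/-- The shift of column `t ∈ {1, 2}` in the coloring: node `(k, t)` has color
`<k + colorShift a t>_p`. It is integer-valued so that colors can be compared by subtraction. -/
def colorShift (a : ℕ → ℕ) (t : ℕ) : ℤ :=
  if t = 1 then 0 else a 2 + 1

theorem colorShift_one (a : ℕ → ℕ) : colorShift a 1 = 0 := rfl

theorem colorShift_two (a : ℕ → ℕ) : colorShift a 2 = a 2 + 1 := rfl

theorem eq_zero_and_eq_of_dvd_add_colorShift_sub {a : ℕ → ℕ} {t u : ℕ} {d : ℤ}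
    (ht : t ∈ Icc 1 2) (hu : u ∈ Icc 1 2) (hd : d ∈ Icc (-a t : ℤ) (a (3 - t)))
    (hdvd : ((a 1 + a 2 + 2 : ℕ) : ℤ) ∣ d + (colorShift a t - colorShift a u)) :
    d = 0 ∧ t = u := by
  obtain ⟨hd₁, hd₂⟩ := Finset.mem_Icc.mp hd
  have hbound : |d + (colorShift a t - colorShift a u)| < (a 1 + a 2 + 2 : ℕ) := by
    rw [abs_lt]
    obtain rfl | rfl := mem_Icc_one_two_iff.mp ht <;>
      obtain rfl | rfl := mem_Icc_one_two_iff.mp hu <;>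
      simp only [colorShift_one, colorShift_two, Nat.reduceSub] at hd₁ hd₂ ⊢ <;>
      omega
  have hzero := Int.eq_zero_of_abs_lt_dvd hdvd hbound
  obtain rfl | rfl := mem_Icc_one_two_iff.mp ht <;>
    obtain rfl | rfl := mem_Icc_one_two_iff.mp hu <;>
    simp only [colorShift_one, colorShift_two, Nat.reduceSub] at hd₁ hd₂ hzero <;>
    omega

theorem mem_knownIdx_two_of_modEq_colorShift {K L : ℕ} {a : ℕ → ℕ} {k u b t : ℕ}
    (hK : K = L + a 1 + a 2 + 1) (hdvd : a 1 + a 2 + 2 ∣ K)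
    (hk : k ∈ Icc 1 K) (hu : u ∈ Icc 1 2) (hb : b ∈ Icc 1 K) (ht : t ∈ Icc 1 2)
    (hne : (k, u) ≠ (b, t))
    (h : (k : ℤ) + colorShift a u ≡ b + colorShift a t [ZMOD (a 1 + a 2 + 2 : ℕ)]) :
    (b, t) ∈ knownIdx K 2 L a k := by
  by_contra hunknown
  obtain ⟨d, hd, hbd⟩ := exists_modEq_of_notMem_knownIdx_two hK hb ht hunknown
  have hbd_dvd : ((a 1 + a 2 + 2 : ℕ) : ℤ) ∣ d - (b - k) :=
    (Int.natCast_dvd_natCast.mpr hdvd).trans hbd.dvd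
  have hshift : ((a 1 + a 2 + 2 : ℕ) : ℤ) ∣ d + (colorShift a t - colorShift a u) := by
    have hsum : d + (colorShift a t - colorShift a u) =
        d - (b - k) + (b + colorShift a t - (k + colorShift a u)) := by ring
    rw [hsum]
    exact dvd_add hbd_dvd h.dvd
  obtain ⟨rfl, rfl⟩ := eq_zero_and_eq_of_dvd_add_colorShift_sub ht hu hd hshift
  have hrow : b = k := eq_of_modEq_of_mem_Icc hb hk (by simpa using hbd.add_right (k : ℤ))
  exact hne (by rw [hrow])

/-- for the `(a_2,a_1)_L`-bar-ICP (the case `i = 2`) with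
`p = a_1 + a_2 + 2` dividing `K`, the coloring assigning node `(k,1)` the color
`<k>_p` and node `(k,2)` the color `<k+a_2+1>_p` is proper: two distinct nodes
receiving the same color are side-information nodes of each other. -/
theorem stmt10 (L : ℕ) (hL : 1 ≤ L) (a : ℕ → ℕ)
    (K p : ℕ) (hK : K = L + a 1 + a 2 + 1) (hp : p = a 1 + a 2 + 2) (hdvd : p ∣ K)
    (col : ℕ × ℕ → ℕ)
    (hcol1 : ∀ k, col (k, 1) = angMod (k : ℤ) p)
    (hcol2 : ∀ k, col (k, 2) = angMod ((k : ℤ) + (a 2 : ℤ) + 1) p)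
    (k₁ t₁ k₂ t₂ : ℕ)
    (hk₁ : k₁ ∈ Finset.Icc 1 K) (ht₁ : t₁ ∈ Finset.Icc 1 2)
    (hk₂ : k₂ ∈ Finset.Icc 1 K) (ht₂ : t₂ ∈ Finset.Icc 1 2)
    (hne : (k₁, t₁) ≠ (k₂, t₂)) (hsame : col (k₁, t₁) = col (k₂, t₂)) :
    (k₂, t₂) ∈ knownIdx K 2 L a k₁ ∧ (k₁, t₁) ∈ knownIdx K 2 L a k₂ := by
  have hcol {k t : ℕ} (ht : t ∈ Finset.Icc 1 2) : col (k, t) = angMod (k + colorShift a t) p := by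
    obtain rfl | rfl := mem_Icc_one_two_iff.mp ht
    · rw [hcol1, colorShift_one, add_zero]
    · rw [hcol2, colorShift_two, add_assoc]
  rw [hcol ht₁, hcol ht₂, angMod_eq_angMod_iff (by omega)] at hsame
  subst hp
  exact ⟨mem_knownIdx_two_of_modEq_colorShift hK hdvd hk₁ ht₁ hk₂ ht₂ hne hsame,
    mem_knownIdx_two_of_modEq_colorShift hK hdvd hk₂ ht₂ hk₁ ht₁ hne.symm hsame.symm⟩
end
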